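/- Let n ≥ 1 and let π, σ be type D elements of S_{2n}, where π is a descending shuffle. If σ ≼ π (the tableau-criterion dominance, i.e., condition (1) of the Billey–Lakshmibai criterion), then the pair (σ, π) satisfies condition (2). Consequently, for elements w, u of the type D Weyl group whose images in S_{2n} are σ and π respectively, w ≤ u in the type D Bruhat order if and only if σ ≤ π in the Bruhat order on S_{2n}. -/

import Mathlib

/- Permutations of {1,…,2n} are modeled zero-based as `Equiv.Perm (Fin (2*n))`;
the one-based position/value `a` corresponds to the zero-based `a - 1`, so
"`2n+1-i`" becomes `Fin.rev`, "value `> n`" becomes `n ≤ ·` on zero-based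
values, and `|a| = min(a, 2n+1-a)` becomes `fun v => min (v+1) (2*n - v)` on a
zero-based value `v`. -/

/-- A signed element of `S_{2n}`. -/
def IsSignedElt (n : ℕ) (π : Equiv.Perm (Fin (2 * n))) : Prop :=
  ∀ i, π i.rev = (π i).rev

/-- A type D element of `S_{2n}`: signed, with `#{i ∈ {1,…,n} : π(i) > n}` even. -/
def IsTypeDElt (n : ℕ) (π : Equiv.Perm (Fin (2 * n))) : Prop :=
  IsSignedElt n π ∧
    Even (Finset.univ.filter (fun i : Fin (2 * n) =>
      (i : ℕ) < n ∧ n ≤ (π i : ℕ))).card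

/-- A descending shuffle: the values `n, n-1, …, 1` appear in this relative order
and the values `2n, 2n-1, …, n+1` appear in this relative order. -/
def IsDescShuffle (n : ℕ) (π : Equiv.Perm (Fin (2 * n))) : Prop :=
  ∀ i j : Fin (2 * n), i < j →
    (((π i : ℕ) < n ∧ (π j : ℕ) < n) ∨ (n ≤ (π i : ℕ) ∧ n ≤ (π j : ℕ))) →
    π j < π i

/-- `sortd n d π` : the first `d` values of `π`, sorted increasingly
(the sequence `sort_d(π)`). -/
def sortd (n d : ℕ) (π : Equiv.Perm (Fin (2 * n))) : List ℕ :=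
  ((Finset.univ.filter (fun i : Fin (2 * n) => (i : ℕ) < d)).image
    (fun i => (π i : ℕ))).sort (· ≤ ·)

/-- Condition (1) of the Billey–Lakshmibai criterion: the tableau-criterion
dominance `σ ≼ π`, entrywise comparison of `sort_d(σ)` and `sort_d(π)` for all
`1 ≤ d ≤ n`. -/
def Dominates (n : ℕ) (σ π : Equiv.Perm (Fin (2 * n))) : Prop :=
  ∀ d, 1 ≤ d → d ≤ n → ∀ j, j < d →
    (sortd n d σ).getD j 0 ≤ (sortd n d π).getD j 0

/-- Condition (2) of the Billey–Lakshmibai criterion for the pair `(σ, π)`. -/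
def Cond2 (n : ℕ) (σ π : Equiv.Perm (Fin (2 * n))) : Prop :=
  ∀ d, 1 ≤ d → d ≤ n → ∀ i r : ℕ, 1 ≤ r → i + r ≤ d →
    ((((sortd n d σ).drop i).take r).map (fun v => min (v + 1) (2 * n - v))).toFinset
        = Finset.Icc (n + 1 - r) n →
    ((((sortd n d π).drop i).take r).map (fun v => min (v + 1) (2 * n - v))).toFinset
        = Finset.Icc (n + 1 - r) n →
    (((sortd n d σ).drop i).take r).countP (fun v => decide (n ≤ v)) % 2
      = (((sortd n d π).drop i).take r).countP (fun v => decide (n ≤ v)) % 2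

/-!
Suppose `π` has a value `x ≥ n` in a window whose absolute values are the `r` largest ones.
As the large values of `π` occur in decreasing order, all values above `x` occur among its first
`d` values, and they supply the absolute values missing from the window. So the sorted list from the
start of the window onwards already realises all `n` absolute values, which forces `d = n` and
makes the window initial. There the entries after the window are all large, for `σ` as well, and
the parity of the window is determined by the parity of all `n` entries. If instead `π` has no
large value in the window, dominance leaves none for `σ`.
-/

open Finset

section Lists

variable {n r : ℕ}

theorem countP_le_of_forall₂_le {α : Type*} [Preorder α] [DecidableLE α] (a : α)
    {K L : List α} (h : List.Forall₂ (· ≤ ·) K L) : K.countP (a ≤ ·) ≤ L.countP (a ≤ ·) := by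
  induction h with
  | nil => rfl
  | cons hxy _ ih =>
    simp only [List.countP_cons, decide_eq_true_eq]
    gcongr
    split_ifs with hx hy
    · rfl
    · exact absurd (hx.trans hxy) hy
    · exact Nat.zero_le _
    · rfl

/-- The absolute value `|a| = min(a, 2n+1-a)` of the one-based value `a = v + 1`. -/
def absVal (n v : ℕ) : ℕ := min (v + 1) (2 * n - v)

/-- The absolute values occurring in `W` are the `r` largest ones, `n+1-r, …, n`. This is the
requirement that condition (2) places on a window of `r` consecutive entries of a sorted list. -/
def HasTopAbsVals (n r : ℕ) (W : List ℕ) : Prop :=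
  (W.map (absVal n)).toFinset = Icc (n + 1 - r) n

theorem HasTopAbsVals.exists_absVal_eq_iff {W : List ℕ} (h : HasTopAbsVals n r W) {y : ℕ} :
    (∃ v ∈ W, absVal n v = y) ↔ n + 1 - r ≤ y ∧ y ≤ n := by
  rw [← mem_Icc, ← h, List.mem_toFinset, List.mem_map]

theorem countP_le_eq_countP_take_add {L : List ℕ} (hL : L.SortedLT) (hr : 1 ≤ r)
    (htop : HasTopAbsVals n r (L.take r)) :
    L.countP (n ≤ ·) = (L.take r).countP (n ≤ ·) + (L.length - r) := by
  obtain ⟨a, ha, han⟩ : ∃ a ∈ L.take r, absVal n a = n :=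
    htop.exists_absVal_eq_iff.2 ⟨by omega, le_rfl⟩
  have hna : n ≤ a + 1 := han ▸ min_le_left _ _
  have hdrop : (L.drop r).countP (n ≤ ·) = L.length - r := by
    rw [← List.length_drop, List.countP_eq_length]
    intro b hb
    have hab : a < b := hL.pairwise.rel_of_mem_take_of_mem_drop ha hb
    exact decide_eq_true (hna.trans hab)
  rw [← hdrop, ← List.countP_append, List.take_append_drop]

theorem Icc_subset_absVal_drop {L : List ℕ} (hL : L.SortedLT) {i x : ℕ}
    (htop : HasTopAbsVals n r ((L.drop i).take r)) (hx : x ∈ (L.drop i).take r)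
    (hup : ∀ v, x ≤ v → v < 2 * n → v ∈ L) :
    Icc 1 n ⊆ ((L.drop i).map (absVal n)).toFinset := by
  have hx_abs : n + 1 - r ≤ absVal n x := (htop.exists_absVal_eq_iff.1 ⟨x, hx, rfl⟩).1
  have mem_drop_of_gt {v : ℕ} (hxv : x < v) (hvn : v < 2 * n) : v ∈ L.drop i := by
    have hv : v ∈ L.take i ++ L.drop i := by
      rw [List.take_append_drop]
      exact hup v hxv.le hvn
    refine (List.mem_append.1 hv).resolve_left fun hv_take => hxv.not_gt ?_
    exact hL.pairwise.rel_of_mem_take_of_mem_drop hv_take (List.mem_of_mem_take hx)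
  intro y hy
  obtain ⟨hy1, hyn⟩ := mem_Icc.1 hy
  rw [List.mem_toFinset, List.mem_map]
  by_cases hyr : n + 1 - r ≤ y
  · obtain ⟨v, hv, hvy⟩ := htop.exists_absVal_eq_iff.2 ⟨hyr, hyn⟩
    exact ⟨v, List.mem_of_mem_take hv, hvy⟩
  · unfold absVal at hx_abs ⊢
    exact ⟨2 * n - y, mem_drop_of_gt (by omega) (by omega), by omega⟩

theorem length_eq_and_eq_zero_of_hasTopAbsVals {L : List ℕ} (hL : L.SortedLT)
    (hlen : L.length ≤ n) {i x : ℕ} (htop : HasTopAbsVals n r ((L.drop i).take r))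
    (hx : x ∈ (L.drop i).take r) (hup : ∀ v, x ≤ v → v < 2 * n → v ∈ L) :
    L.length = n ∧ i = 0 := by
  have hpos : 0 < (L.drop i).length := List.length_pos_of_mem (List.mem_of_mem_take hx)
  have hn : n ≤ (L.drop i).length := calc
    n = #(Icc 1 n) := by simp
    _ ≤ #((L.drop i).map (absVal n)).toFinset :=
      card_le_card (Icc_subset_absVal_drop hL htop hx hup)
    _ ≤ ((L.drop i).map (absVal n)).length := List.toFinset_card_le _
    _ = (L.drop i).length := List.length_map _
  rw [List.length_drop] at hpos hn
  omega

end Lists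

section SortedValues

variable {n d : ℕ} {π σ : Equiv.Perm (Fin (2 * n))}

theorem coe_perm_injective (π : Equiv.Perm (Fin (2 * n))) :
    Function.Injective fun i => (π i : ℕ) :=
  Fin.val_injective.comp π.injective

theorem mem_sortd {v : ℕ} : v ∈ sortd n d π ↔ ∃ p : Fin (2 * n), (p : ℕ) < d ∧ (π p : ℕ) = v := by
  simp [sortd]

theorem sortedLT_sortd : (sortd n d π).SortedLT :=
  sortedLT_sort _

theorem length_sortd (hd : d ≤ 2 * n) : (sortd n d π).length = d := by
  rw [sortd, length_sort, card_image_of_injective _ (coe_perm_injective π),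
    Fin.card_filter_val_lt, min_eq_right hd]

theorem countP_sortd (p : ℕ → Prop) [DecidablePred p] :
    (sortd n d π).countP p = #{i : Fin (2 * n) | (i : ℕ) < d ∧ p (π i)} := by
  rw [sortd, ← Multiset.coe_countP, sort_eq, Multiset.countP_eq_card_filter, ← filter_val,
    card_val, filter_image, card_image_of_injective _ (coe_perm_injective π), filter_filter]

theorem mem_sortd_of_ge (hanti : StrictAntiOn π {i | n ≤ (π i : ℕ)}) {x v : ℕ}
    (hx : x ∈ sortd n d π) (hnx : n ≤ x) (hxv : x ≤ v) (hv : v < 2 * n) : v ∈ sortd n d π := by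
  obtain ⟨p, hp, rfl⟩ := mem_sortd.1 hx
  set q := π.symm ⟨v, hv⟩
  have hq : π q = ⟨v, hv⟩ := π.apply_symm_apply _
  have hqp : q ≤ p := by
    refine (hanti.le_iff_ge hnx ?_).1 ?_
    · simpa [hq] using hnx.trans hxv
    · simpa [hq, Fin.le_def] using hxv
  exact mem_sortd.2 ⟨q, (Fin.le_def.1 hqp).trans_lt hp, by rw [hq]⟩

theorem Dominates.forall₂_sortd (h : Dominates n σ π) (hd1 : 1 ≤ d) (hdn : d ≤ n) :
    List.Forall₂ (· ≤ ·) (sortd n d σ) (sortd n d π) := by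
  have hσ : (sortd n d σ).length = d := length_sortd (by omega)
  have hπ : (sortd n d π).length = d := length_sortd (by omega)
  refine List.forall₂_iff_get.2 ⟨hσ.trans hπ.symm, fun j hjσ hjπ => ?_⟩
  simpa only [List.getD_eq_getElem, hjσ, hjπ, List.get_eq_getElem] using h d hd1 hdn j (hσ ▸ hjσ)

theorem IsDescShuffle.strictAntiOn (h : IsDescShuffle n π) :
    StrictAntiOn π {i | n ≤ (π i : ℕ)} :=
  fun i hi j hj hij => h i j hij (.inr ⟨hi, hj⟩)

end SortedValues

theorem stmt_5_general {n : ℕ} {π σ : Equiv.Perm (Fin (2 * n))}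
    (hanti : StrictAntiOn π {i | n ≤ (π i : ℕ)})
    (hparity : #{i : Fin (2 * n) | (i : ℕ) < n ∧ n ≤ (σ i : ℕ)} ≡
      #{i : Fin (2 * n) | (i : ℕ) < n ∧ n ≤ (π i : ℕ)} [MOD 2])
    (hdom : Dominates n σ π) : Cond2 n σ π := by
  intro d hd1 hdn i r hr hir hσtop hπtop
  by_cases hlarge : ∃ x ∈ ((sortd n d π).drop i).take r, n ≤ x
  · obtain ⟨x, hx, hnx⟩ := hlarge
    have hlen (τ : Equiv.Perm (Fin (2 * n))) : (sortd n d τ).length = d :=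
      length_sortd (by omega)
    have hx_mem : x ∈ sortd n d π := List.mem_of_mem_drop (List.mem_of_mem_take hx)
    obtain ⟨hd, rfl⟩ := length_eq_and_eq_zero_of_hasTopAbsVals sortedLT_sortd
      ((hlen π).trans_le hdn) hπtop hx fun _ => mem_sortd_of_ge hanti hx_mem hnx
    obtain rfl : d = n := (hlen π).symm.trans hd
    rw [← countP_sortd, ← countP_sortd, countP_le_eq_countP_take_add sortedLT_sortd hr hσtop,
      countP_le_eq_countP_take_add sortedLT_sortd hr hπtop, hlen, hlen] at hparity
    exact hparity.add_right_cancel'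
  · have hπ_zero : (((sortd n d π).drop i).take r).countP (n ≤ ·) = 0 := by
      simpa [List.countP_eq_zero] using hlarge
    have hσ_le := countP_le_of_forall₂_le n
      (List.forall₂_take r (List.forall₂_drop i (hdom.forall₂_sortd hd1 hdn)))
    rw [hπ_zero, Nat.le_zero.1 (hσ_le.trans_eq hπ_zero)]

/-- if `π, σ` are type D elements of `S_{2n}` with `π` a descending
shuffle, and `σ ≼ π` (condition (1)), then `(σ, π)` satisfies condition (2).
Consequently (since the type D Bruhat order is characterized by conditions (1)
and (2) together, and the Bruhat order on `S_{2n}` restricted to signed elements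
by condition (1) alone), `w ≤ u` in the type D Bruhat order iff `σ ≤ π` in the
Bruhat order on `S_{2n}`. -/
theorem stmt_5 (n : ℕ) (hn : 1 ≤ n) (π σ : Equiv.Perm (Fin (2 * n)))
    (hπ : IsTypeDElt n π) (hσ : IsTypeDElt n σ) (hdesc : IsDescShuffle n π) :
    (Dominates n σ π → Cond2 n σ π) ∧
    ((Dominates n σ π ∧ Cond2 n σ π) ↔ Dominates n σ π) := by
  have hparity := (Nat.even_iff.1 hσ.2).trans (Nat.even_iff.1 hπ.2).symm
  have hcond : Dominates n σ π → Cond2 n σ π := stmt_5_general hdesc.strictAntiOn hparity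
  exact ⟨hcond, and_iff_left_of_imp hcond⟩
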